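/- arXiv:2010.03669 — 2 statements merged into one kernel-verified Lean document; each statement's English description precedes it below -/
import Mathlib

section
/- Symmetrized distance via non-decreasing rearrangements. Let N ≥ 2 and x, y ∈ ℤ^N. Then d_S(x, y) = ‖x̂ − ŷ‖_∞, where x̂ denotes the non-decreasing rearrangement of x and the symmetrized distance is d_S(x,y) = min_{π ∈ S_N} ‖x − πy‖_∞. -/
theorem exists_ge_perm_le {N : ℕ} (σ : Equiv.Perm (Fin N)) (j : Fin N) :
    ∃ i, j ≤ i ∧ σ i ≤ j := by
  by_contra! h
  have h1 : (Finset.Ici j).card ≤ (Finset.Ioi j).card :=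
    Finset.card_le_card_of_injOn σ (fun i hi => by simpa using h i (by simpa using hi))
      σ.injective.injOn
  rw [Fin.card_Ici, Fin.card_Ioi] at h1
  have := j.2
  omega

/-- **Symmetrized distance via non-decreasing rearrangements.**
`xh` and `yh` are the non-decreasing rearrangements of `x` and `y`; the symmetrized distance
`d_S(x,y) = min_{π ∈ S_N} ‖x - π y‖_∞` equals `‖x̂ - ŷ‖_∞`. -/
theorem dS_eq_dist_of_rearrangements
    (N : ℕ) (hN : 2 ≤ N) (x y xh yh : Fin N → ℤ)
    (hxh_mono : Monotone xh) (hxh_perm : ∃ π : Equiv.Perm (Fin N), xh = x ∘ π)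
    (hyh_mono : Monotone yh) (hyh_perm : ∃ π : Equiv.Perm (Fin N), yh = y ∘ π) :
    (Finset.univ.inf' ⟨1, Finset.mem_univ 1⟩
        fun π : Equiv.Perm (Fin N) => Finset.univ.sup fun j => (x j - y (π j)).natAbs)
      = Finset.univ.sup fun j => (xh j - yh j).natAbs := by
  obtain ⟨p, rfl⟩ := hxh_perm
  obtain ⟨q, rfl⟩ := hyh_perm
  apply le_antisymm
  · refine (Finset.inf'_le _ (Finset.mem_univ (q * p⁻¹))).trans ?_
    refine Finset.sup_le fun j _ => ?_
    have := Finset.le_sup (f := fun j => ((x ∘ p) j - (y ∘ q) j).natAbs)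
      (Finset.mem_univ (p⁻¹ j))
    simpa using this
  · refine Finset.le_inf' _ _ fun π _ => Finset.sup_le fun j _ => ?_
    have key : ∀ i, (x (p i) - y (π (p i))).natAbs ≤
        Finset.univ.sup fun j => (x j - y (π j)).natAbs := fun i =>
      Finset.le_sup (f := fun j => (x j - y (π j)).natAbs) (Finset.mem_univ (p i))
    obtain ⟨i, hi, hi'⟩ := exists_ge_perm_le (q⁻¹ * π * p) j
    obtain ⟨k, hk, hk'⟩ := exists_ge_perm_le (q⁻¹ * π * p)⁻¹ j
    have a1 := hxh_mono hi
    have a2 := hyh_mono hi'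
    have b1 := hyh_mono hk
    have b2 := hxh_mono hk'
    have c1 := key i
    have c2 := key ((q⁻¹ * π * p)⁻¹ k)
    simp [mul_inv_rev] at a1 a2 b1 b2 c1 c2 ⊢
    omega
end

section
/- Rearrangement inequality for the ℓ^∞ norm. Let N ≥ 2 and let x, y ∈ ℤ^N both be non-decreasing (x_j ≤ x_{j+1} and y_j ≤ y_{j+1} for all 1 ≤ j ≤ N−1). Then for every permutation π ∈ S_N, ‖x − πy‖_∞ ≥ ‖x − y‖_∞. -/
theorem perm_exists_ge_le {N : ℕ} (π : Equiv.Perm (Fin N)) (j : Fin N) :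
    ∃ k, j ≤ k ∧ π k ≤ j := by
  by_contra! h
  have h1 := Finset.card_le_card_of_injOn (s := Finset.Ici j) (t := Finset.Ioi j) π
    (fun k hk => by simpa using h k (by simpa using hk)) π.injective.injOn
  rw [Fin.card_Ici, Fin.card_Ioi] at h1
  have := j.isLt
  omega

theorem perm_exists_le_ge {N : ℕ} (π : Equiv.Perm (Fin N)) (j : Fin N) :
    ∃ k, k ≤ j ∧ j ≤ π k := by
  obtain ⟨k, h1, h2⟩ := perm_exists_ge_le π.symm j
  exact ⟨π.symm k, h2, by simpa using h1⟩

/-- **Rearrangement inequality for the `ℓ^∞` norm.** If `x` and `y` are non-decreasing, then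
`‖x - π y‖_∞ ≥ ‖x - y‖_∞` for every permutation `π`. -/
theorem rearrangement_linf
    (N : ℕ) (hN : 2 ≤ N) (x y : Fin N → ℤ)
    (hx : Monotone x) (hy : Monotone y) (π : Equiv.Perm (Fin N)) :
    (Finset.univ.sup fun j => (x j - y j).natAbs) ≤
      Finset.univ.sup fun j => (x j - y (π j)).natAbs := by
  refine Finset.sup_le fun j _ => ?_
  obtain ⟨k, hk⟩ : ∃ k, (x j - y j).natAbs ≤ (x k - y (π k)).natAbs := by
    rcases le_total (y j) (x j) with h | h
    · obtain ⟨k, h1, h2⟩ := perm_exists_ge_le π j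
      have := hx h1
      have := hy h2
      exact ⟨k, by omega⟩
    · obtain ⟨k, h1, h2⟩ := perm_exists_le_ge π j
      have := hx h1
      have := hy h2
      exact ⟨k, by omega⟩
  exact hk.trans (Finset.le_sup (f := fun j => (x j - y (π j)).natAbs) (Finset.mem_univ k))
end
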